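/- arXiv:2111.02968 — 7 statements merged into one kernel-verified Lean document; each statement's English description precedes it below -/
import Mathlib

section
/- Define polynomials p_n on [0,1] by p_0(x) = x and p_{n+1}(x) = x² + x·p_n(x) − x²·p_n(x). Then sup_{x ∈ [0,1]} | p_n(x) − x²/(x² − x + 1) | → 0 as n → ∞. -/
open Filter

/-- With `p_0(x) = x` and `p_{n+1}(x) = x² + x p_n(x) − x² p_n(x)`,
the functions `p_n` converge uniformly on `[0,1]` to `x²/(x² − x + 1)`. -/
theorem stmt11 (p : ℕ → ℝ → ℝ)
    (hp0 : ∀ x : ℝ, p 0 x = x)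
    (hrec : ∀ n : ℕ, ∀ x : ℝ, p (n + 1) x = x ^ 2 + x * p n x - x ^ 2 * p n x) :
    TendstoUniformlyOn (fun n x => p n x) (fun x => x ^ 2 / (x ^ 2 - x + 1)) atTop
      (Set.Icc (0 : ℝ) 1) := by
  have key : ∀ n : ℕ, ∀ x ∈ Set.Icc (0 : ℝ) 1,
      |x ^ 2 / (x ^ 2 - x + 1) - p n x| ≤ (1 / 4 : ℝ) ^ n := by
    intro n x hx
    obtain ⟨h0, h1⟩ := hx
    have hpos : 0 < x ^ 2 - x + 1 := by nlinarith [sq_nonneg (x - 1 / 2)]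
    obtain ⟨f, hf⟩ : ∃ f, f = x ^ 2 / (x ^ 2 - x + 1) := ⟨_, rfl⟩
    have hf0 : 0 ≤ f := by rw [hf]; positivity
    have hf1 : f ≤ 1 := by rw [hf, div_le_one hpos]; linarith
    have hfe : f * (x ^ 2 - x + 1) = x ^ 2 := by
      rw [hf]; exact div_mul_cancel₀ _ hpos.ne'
    rw [← hf]
    induction n with
    | zero =>
      rw [hp0, pow_zero, abs_le]
      constructor <;> linarith
    | succ k ih =>
      have e : f - p (k + 1) x = (x - x ^ 2) * (f - p k x) := by
        rw [hrec]; linear_combination hfe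
      have ha : 0 ≤ x - x ^ 2 := by nlinarith
      have hb : x - x ^ 2 ≤ 1 / 4 := by nlinarith [sq_nonneg (x - 1 / 2)]
      rw [e, abs_mul, abs_of_nonneg ha, pow_succ' (1 / 4 : ℝ) k]
      exact mul_le_mul hb ih (abs_nonneg _) (by norm_num)
  rw [Metric.tendstoUniformlyOn_iff]
  intro ε hε
  have ht : Tendsto (fun n : ℕ => (1 / 4 : ℝ) ^ n) atTop (nhds 0) :=
    tendsto_pow_atTop_nhds_zero_of_lt_one (by norm_num) (by norm_num)
  filter_upwards [ht.eventually_lt_const hε] with n hn x hx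
  rw [Real.dist_eq]
  exact (key n x hx).trans_lt hn
end

section
/- Define polynomials p_n on [0,1] by p_0(x) = x and p_{n+1}(x) = x² + x·p_n(x) − x²·p_n(x). Then lim_{n → ∞} ∫_0^1 p_n(x)/x dx = ∫_0^1 x/(1 − x + x²) dx = π/(3√3). -/
open Filter intervalIntegral Real

/-- With `p_0(x) = x` and `p_{n+1}(x) = x² + x p_n(x) − x² p_n(x)`,
one has `lim_{n → ∞} ∫_0^1 p_n(x)/x dx = ∫_0^1 x/(1 − x + x²) dx = π/(3√3)`. -/
theorem stmt12 (p : ℕ → ℝ → ℝ)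
    (hp0 : ∀ x : ℝ, p 0 x = x)
    (hrec : ∀ n : ℕ, ∀ x : ℝ, p (n + 1) x = x ^ 2 + x * p n x - x ^ 2 * p n x) :
    Tendsto (fun n => ∫ x in (0 : ℝ)..1, p n x / x) atTop
      (nhds (∫ x in (0 : ℝ)..1, x / (1 - x + x ^ 2))) ∧
    (∫ x in (0 : ℝ)..1, x / (1 - x + x ^ 2)) = π / (3 * Real.sqrt 3) := by
  have hD : ∀ x : ℝ, 0 < 1 - x + x ^ 2 := fun x => by nlinarith [sq_nonneg (2 * x - 1)]
  constructor
  · have hcont : ∀ n, Continuous (p n) := by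
      intro n
      induction n with
      | zero =>
        have : p 0 = fun x => x := funext hp0
        rw [this]; fun_prop
      | succ k ih =>
        have : p (k + 1) = fun x => x ^ 2 + x * p k x - x ^ 2 * p k x := funext (hrec k)
        rw [this]; fun_prop
    have hform : ∀ n, ∀ x : ℝ, x ≠ 0 → p n x / x =
        x / (1 - x + x ^ 2) + (x - x ^ 2) ^ n * (1 - x / (1 - x + x ^ 2)) := by
      intro n x hx
      have hd := (hD x).ne'
      induction n with
      | zero => rw [hp0]; field_simp; ring
      | succ k ih =>
        have h1 : p (k + 1) x / x = x + (x - x ^ 2) * (p k x / x) := by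
          rw [hrec]; field_simp; ring
        rw [h1, ih]
        generalize hf : x / (1 - x + x ^ 2) = f
        have h2 : x = f * (1 - x + x ^ 2) := by rw [← hf]; field_simp
        rw [pow_succ]
        linear_combination h2
    apply tendsto_integral_filter_of_dominated_convergence (fun _ => (1 : ℝ))
    · exact Eventually.of_forall fun n =>
        ((hcont n).measurable.div measurable_id).aestronglyMeasurable
    · refine Eventually.of_forall fun n => Eventually.of_forall fun x hx => ?_
      rw [Set.uIoc_of_le zero_le_one] at hx
      obtain ⟨h0, h1⟩ := hx
      rw [hform n x h0.ne']
      have f0 : 0 ≤ x / (1 - x + x ^ 2) := div_nonneg h0.le (hD x).le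
      have f1 : x / (1 - x + x ^ 2) ≤ 1 := by
        rw [div_le_one (hD x)]; nlinarith [sq_nonneg (x - 1)]
      have g0 : 0 ≤ x - x ^ 2 := by nlinarith
      have g1 : x - x ^ 2 ≤ 1 := by nlinarith
      have k0 := pow_nonneg g0 n
      have k1 := pow_le_one₀ (n := n) g0 g1
      rw [Real.norm_eq_abs, abs_le]
      constructor <;> nlinarith
    · simp
    · refine Eventually.of_forall fun x hx => ?_
      rw [Set.uIoc_of_le zero_le_one] at hx
      obtain ⟨h0, h1⟩ := hx
      simp_rw [fun n => hform n x h0.ne']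
      have g0 : 0 ≤ x - x ^ 2 := by nlinarith
      have g1 : x - x ^ 2 < 1 := by nlinarith [sq_nonneg (2 * x - 1)]
      have := ((tendsto_pow_atTop_nhds_zero_of_lt_one g0 g1).mul_const
        (1 - x / (1 - x + x ^ 2))).const_add (x / (1 - x + x ^ 2))
      simpa using this
  · have h3 : (0 : ℝ) < √3 := by positivity
    have hs : √3 ^ 2 = (3 : ℝ) := Real.sq_sqrt (by norm_num)
    have hder : ∀ x ∈ Set.uIcc (0 : ℝ) 1, HasDerivAt
        (fun x : ℝ => 1 / 2 * Real.log (1 - x + x ^ 2) + 1 / √3 * arctan ((2 * x - 1) / √3))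
        (x / (1 - x + x ^ 2)) x := by
      intro x _
      have a : HasDerivAt (fun x : ℝ => 1 - x + x ^ 2) (-1 + 2 * x) x := by
        exact (((hasDerivAt_id x).const_sub 1).add (hasDerivAt_pow 2 x)).congr_deriv (by simp)
      have b : HasDerivAt (fun x : ℝ => (2 * x - 1) / √3) (2 / √3) x := by
        simpa using ((((hasDerivAt_id x).const_mul 2).sub_const 1).div_const (√3))
      have c := ((a.log (hD x).ne').const_mul (1 / 2)).add (b.arctan.const_mul (1 / √3))
      refine HasDerivAt.congr_deriv c ?_
      have e : 1 + ((2 * x - 1) / √3) ^ 2 = 4 / 3 * (1 - x + x ^ 2) := by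
        rw [div_pow, hs]; ring
      have e2 : 1 / √3 * (1 / (4 / 3 * (1 - x + x ^ 2)) * (2 / √3))
          = 2 / (√3 ^ 2) / (4 / 3 * (1 - x + x ^ 2)) := by
        have := (hD x).ne'
        field_simp
      rw [e, e2, hs]
      have := (hD x).ne'
      field_simp
      ring
    have hat : arctan (1 / √3) = π / 6 := by
      rw [← Real.tan_pi_div_six]
      exact arctan_tan (by linarith [pi_pos]) (by linarith [pi_pos])
    rw [integral_eq_sub_of_hasDerivAt hder]
    · have e1 : (2 * 1 - 1 : ℝ) / √3 = 1 / √3 := by norm_num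
      have e0 : (2 * 0 - 1 : ℝ) / √3 = -(1 / √3) := by ring
      rw [e1, e0, arctan_neg, hat]
      norm_num
      field_simp
      ring
    · apply Continuous.intervalIntegrable
      exact continuous_id.div (by fun_prop) fun x => (hD x).ne'
end

section
/- For every integer m ≥ 0, ∫_0^1 ( m·(x − x²)^m + x·(x − x²)^m/(1 − x + x²) ) dx = π/(3√3) + m / ( (m+1)·C(2m+1, m) ) − Σ_{j=0}^{m−1} 1 / ( (j+1)·C(2j+2, j+1) ), where C(n,k) denotes the binomial coefficient (and the empty sum for m = 0 is 0). -/
open intervalIntegral Real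

lemma aux_pos (x : ℝ) : 0 < 1 - x + x ^ 2 := by nlinarith [sq_nonneg (2 * x - 1)]

lemma aux_int (m : ℕ) : IntervalIntegrable (fun x : ℝ => (x - x ^ 2) ^ m) MeasureTheory.volume 0 1 :=
  Continuous.intervalIntegrable (by fun_prop) _ _

lemma aux_intx (m : ℕ) :
    IntervalIntegrable (fun x : ℝ => x * (x - x ^ 2) ^ m) MeasureTheory.volume 0 1 :=
  Continuous.intervalIntegrable (by fun_prop) _ _

lemma aux_intJ (m : ℕ) :
    IntervalIntegrable (fun x : ℝ => x * (x - x ^ 2) ^ m / (1 - x + x ^ 2))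
      MeasureTheory.volume 0 1 :=
  Continuous.intervalIntegrable
    (Continuous.div (by fun_prop) (by fun_prop) (fun x => (aux_pos x).ne')) _ _

lemma aux_deriv (x : ℝ) : HasDerivAt (fun x : ℝ => x - x ^ 2) (1 - 2 * x) x := by
  have := (hasDerivAt_id x).sub (hasDerivAt_pow 2 x)
  refine HasDerivAt.congr_deriv (this) ?_
  norm_num

lemma aux_rec (m : ℕ) :
    (4 * (m : ℝ) + 6) * (∫ x in (0 : ℝ)..1, (x - x ^ 2) ^ (m + 1))
      = (m + 1) * ∫ x in (0 : ℝ)..1, (x - x ^ 2) ^ m := by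
  have h : ∫ x in (0 : ℝ)..1, ((4 * (m : ℝ) + 6) * (x - x ^ 2) ^ (m + 1)
      - (m + 1) * (x - x ^ 2) ^ m) = 0 := by
    rw [integral_eq_sub_of_hasDerivAt
      (f := fun x : ℝ => (x - x ^ 2) ^ (m + 1) * (2 * x - 1))]
    · simp
    · intro x _
      have h2 : HasDerivAt (fun x : ℝ => 2 * x - 1) 2 x := by
        simpa using ((hasDerivAt_id x).const_mul 2).sub_const 1
      refine HasDerivAt.congr_deriv (((aux_deriv x).pow (m + 1)).mul h2) ?_
      simp only [Pi.pow_apply, Nat.add_sub_cancel]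
      push_cast
      ring
    · exact ((aux_int _).const_mul _).sub ((aux_int _).const_mul _)
  rw [integral_sub ((aux_int _).const_mul _) ((aux_int _).const_mul _), integral_const_mul,
    integral_const_mul] at h
  linarith

lemma aux_half (m : ℕ) :
    (∫ x in (0 : ℝ)..1, x * (x - x ^ 2) ^ m) = (∫ x in (0 : ℝ)..1, (x - x ^ 2) ^ m) / 2 := by
  have h : ∫ x in (0 : ℝ)..1, ((x - x ^ 2) ^ m - 2 * (x * (x - x ^ 2) ^ m)) = 0 := by
    rw [integral_eq_sub_of_hasDerivAt
      (f := fun x : ℝ => (x - x ^ 2) ^ (m + 1) / ((m : ℝ) + 1))]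
    · simp
    · intro x _
      refine HasDerivAt.congr_deriv (((aux_deriv x).pow (m + 1)).div_const ((m : ℝ) + 1)) ?_
      have : (m : ℝ) + 1 ≠ 0 := by positivity
      simp only [Nat.add_sub_cancel]
      push_cast
      field_simp
    · exact (aux_int _).sub ((aux_intx _).const_mul _)
  rw [integral_sub (aux_int _) ((aux_intx _).const_mul _), integral_const_mul] at h
  linarith

lemma aux_B (m : ℕ) :
    (∫ x in (0 : ℝ)..1, (x - x ^ 2) ^ m)
      = (m.factorial : ℝ) ^ 2 / ((2 * m + 1).factorial : ℝ) := by
  induction m with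
  | zero => simp
  | succ m ih =>
    have h := aux_rec m
    rw [ih] at h
    have e : 2 * (m + 1) + 1 = (2 * m + 1) + 1 + 1 := by ring
    rw [e, Nat.factorial_succ (2 * m + 1 + 1), Nat.factorial_succ (2 * m + 1),
      Nat.factorial_succ m]
    have h1 : ((2 * m + 1).factorial : ℝ) ≠ 0 := by positivity
    have h2 : (4 * (m : ℝ) + 6) ≠ 0 := by positivity
    apply mul_left_cancel₀ h2
    rw [h]
    push_cast
    have h3 : (2 * (m : ℝ) + 1 + 1 + 1) ≠ 0 := by positivity
    have h4 : (2 * (m : ℝ) + 1 + 1) ≠ 0 := by positivity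
    field_simp
    ring

lemma aux_J0 : (∫ x in (0 : ℝ)..1, x * (x - x ^ 2) ^ 0 / (1 - x + x ^ 2))
    = π / (3 * Real.sqrt 3) := by
  have s0 : Real.sqrt 3 ≠ 0 := by positivity
  have s2 : Real.sqrt 3 ^ 2 = 3 := Real.sq_sqrt (by norm_num)
  have ha : arctan ((Real.sqrt 3)⁻¹) = π / 6 := by
    rw [← one_div, ← tan_pi_div_six]
    apply arctan_tan <;> linarith [pi_pos]
  rw [integral_eq_sub_of_hasDerivAt
    (f := fun x : ℝ => Real.log (1 - x + x ^ 2) / 2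
      + arctan ((2 * x - 1) / Real.sqrt 3) / Real.sqrt 3)]
  · have e1 : ((2 : ℝ) * 1 - 1) / Real.sqrt 3 = (Real.sqrt 3)⁻¹ := by norm_num
    have e2 : ((2 : ℝ) * 0 - 1) / Real.sqrt 3 = -(Real.sqrt 3)⁻¹ := by
      rw [← one_div]; ring
    simp only [e1, e2, arctan_neg, ha]
    norm_num
    field_simp
    norm_num
  · intro x _
    have hp := (aux_pos x).ne'
    have h1 : HasDerivAt (fun x : ℝ => 1 - x + x ^ 2) (-1 + 2 * x) x := by
      have := ((hasDerivAt_id x).const_sub 1).add (hasDerivAt_pow 2 x)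
      refine HasDerivAt.congr_deriv (this) ?_
      norm_num
    have h2 : HasDerivAt (fun x : ℝ => (2 * x - 1) / Real.sqrt 3) (2 / Real.sqrt 3) x := by
      have := (((hasDerivAt_id x).const_mul 2).sub_const 1).div_const (Real.sqrt 3)
      simpa using this
    have h3 := ((h1.log hp).div_const 2).add (h2.arctan.div_const (Real.sqrt 3))
    refine HasDerivAt.congr_deriv (h3) ?_
    have e : 1 + ((2 * x - 1) / Real.sqrt 3) ^ 2 = 4 / 3 * (1 - x + x ^ 2) := by
      rw [div_pow, s2]; ring
    rw [e]
    have e3 : 1 / (4 / 3 * (1 - x + x ^ 2)) * (2 / Real.sqrt 3) / Real.sqrt 3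
        = 1 / (2 * (1 - x + x ^ 2)) := by
      have : 1 / (4 / 3 * (1 - x + x ^ 2)) * (2 / Real.sqrt 3) / Real.sqrt 3
        = 1 / (4 / 3 * (1 - x + x ^ 2)) * (2 / Real.sqrt 3 ^ 2) := by ring
      rw [this, s2]
      field_simp
      norm_num
    rw [e3]
    field_simp
    ring
  · exact aux_intJ 0

lemma aux_J (m : ℕ) : (∫ x in (0 : ℝ)..1, x * (x - x ^ 2) ^ m / (1 - x + x ^ 2))
    = π / (3 * Real.sqrt 3)
      - ∑ j ∈ Finset.range m, 1 / (((j : ℝ) + 1) * (Nat.choose (2 * j + 2) (j + 1) : ℝ)) := by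
  induction m with
  | zero => rw [aux_J0]; simp
  | succ m ih =>
    rw [Finset.sum_range_succ, ← sub_sub, ← ih]
    have h : (∫ x in (0 : ℝ)..1, x * (x - x ^ 2) ^ (m + 1) / (1 - x + x ^ 2))
        = ∫ x in (0 : ℝ)..1, (x * (x - x ^ 2) ^ m / (1 - x + x ^ 2) - x * (x - x ^ 2) ^ m) := by
      congr 1
      ext x
      have hp := (aux_pos x).ne'
      field_simp
      ring
    rw [h, integral_sub (aux_intJ m) (aux_intx m), aux_half, aux_B]
    congr 1
    have e : 2 * m + 2 = (m + 1) + (m + 1) := by ring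
    rw [e, Nat.cast_add_choose, ← e, Nat.factorial_succ (2 * m + 1), Nat.factorial_succ m]
    have h1 : ((2 * m + 1).factorial : ℝ) ≠ 0 := by positivity
    have h2 : (m.factorial : ℝ) ≠ 0 := by positivity
    push_cast
    have h4 : (2 * (m : ℝ) + 1 + 1) ≠ 0 := by positivity
    field_simp
    ring

/-- For every integer `m ≥ 0`,
`∫_0^1 (m (x−x²)^m + x (x−x²)^m/(1−x+x²)) dx
  = π/(3√3) + m/((m+1) C(2m+1,m)) − Σ_{j=0}^{m−1} 1/((j+1) C(2j+2,j+1))`. -/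
theorem stmt13 (m : ℕ) :
    (∫ x in (0 : ℝ)..1,
        ((m : ℝ) * (x - x ^ 2) ^ m + x * (x - x ^ 2) ^ m / (1 - x + x ^ 2)))
      = π / (3 * Real.sqrt 3)
        + (m : ℝ) / ((m + 1) * (Nat.choose (2 * m + 1) m : ℝ))
        - ∑ j ∈ Finset.range m, 1 / (((j : ℝ) + 1) * (Nat.choose (2 * j + 2) (j + 1) : ℝ)) := by
  rw [integral_add ((aux_int m).const_mul _) (aux_intJ m), integral_const_mul, aux_J, aux_B]
  have h : (m : ℝ) * ((m.factorial : ℝ) ^ 2 / ((2 * m + 1).factorial : ℝ))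
      = (m : ℝ) / ((m + 1) * (Nat.choose (2 * m + 1) m : ℝ)) := by
    have e : 2 * m + 1 = m + (m + 1) := by ring
    rw [e, Nat.cast_add_choose, ← e, Nat.factorial_succ m]
    have h1 : ((2 * m + 1).factorial : ℝ) ≠ 0 := by positivity
    have h2 : (m.factorial : ℝ) ≠ 0 := by positivity
    push_cast
    field_simp
  rw [h]
  ring
end

section
/- One has Σ_{m=0}^{∞} ∫_0^1 ( m·(x − x²)^m + x·(x − x²)^m/(1 − x + x²) ) dx = ∫_0^1 (2x − x²)/(1 − x + x²)² dx = 1. -/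
open intervalIntegral

/-- `Σ_{m=0}^∞ ∫_0^1 (m (x−x²)^m + x (x−x²)^m/(1−x+x²)) dx = ∫_0^1 (2x−x²)/(1−x+x²)² dx = 1`. -/
theorem stmt14 :
    (∑' m : ℕ, ∫ x in (0 : ℝ)..1,
        ((m : ℝ) * (x - x ^ 2) ^ m + x * (x - x ^ 2) ^ m / (1 - x + x ^ 2)))
      = ∫ x in (0 : ℝ)..1, (2 * x - x ^ 2) / (1 - x + x ^ 2) ^ 2 ∧
    (∫ x in (0 : ℝ)..1, (2 * x - x ^ 2) / (1 - x + x ^ 2) ^ 2) = 1 := by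
  have hD : ∀ x : ℝ, 0 < 1 - x + x ^ 2 := fun x => by nlinarith [sq_nonneg (x - 1 / 2)]
  have hD0 : ∀ x : ℝ, 1 - x + x ^ 2 ≠ 0 := fun x => (hD x).ne'
  constructor
  · have hsb : Summable (fun m : ℕ => (m : ℝ) * (1 / 4 : ℝ) ^ m + 2 * (1 / 4 : ℝ) ^ m) := by
      refine Summable.add ?_ ?_
      · exact (hasSum_coe_mul_geometric_of_norm_lt_one (by norm_num)).summable
      · exact (summable_geometric_of_lt_one (by norm_num) (by norm_num)).mul_left 2
    refine (intervalIntegral.hasSum_integral_of_dominated_convergence (ι := ℕ)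
      (F := fun (m : ℕ) (x : ℝ) =>
        (m : ℝ) * (x - x ^ 2) ^ m + x * (x - x ^ 2) ^ m / (1 - x + x ^ 2))
      (f := fun x : ℝ => (2 * x - x ^ 2) / (1 - x + x ^ 2) ^ 2)
      (fun (m : ℕ) (_ : ℝ) => (m : ℝ) * (1 / 4 : ℝ) ^ m + 2 * (1 / 4 : ℝ) ^ m) ?_ ?_ ?_ ?_ ?_).tsum_eq
    · intro m
      refine Continuous.aestronglyMeasurable ?_
      exact Continuous.add (by fun_prop) (Continuous.div (by fun_prop) (by fun_prop) hD0)
    · intro m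
      refine Filter.Eventually.of_forall fun x hx => ?_
      rw [Set.uIoc_of_le zero_le_one] at hx
      have h0 : 0 ≤ x - x ^ 2 := by nlinarith [hx.1, hx.2]
      have h1 : x - x ^ 2 ≤ 1 / 4 := by nlinarith [sq_nonneg (x - 1 / 2)]
      have hp : (x - x ^ 2) ^ m ≤ (1 / 4) ^ m := pow_le_pow_left₀ h0 h1 m
      have hp0 : 0 ≤ (x - x ^ 2) ^ m := pow_nonneg h0 m
      have hq0 : 0 ≤ x * (x - x ^ 2) ^ m / (1 - x + x ^ 2) :=
        div_nonneg (mul_nonneg hx.1.le hp0) (hD x).le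
      rw [Real.norm_of_nonneg (by positivity)]
      refine add_le_add (by gcongr) ?_
      rw [div_le_iff₀ (hD x)]
      have h2 : x ≤ 2 * (1 - x + x ^ 2) := by nlinarith [hx.2]
      calc x * (x - x ^ 2) ^ m ≤ 2 * (1 - x + x ^ 2) * (1 / 4) ^ m :=
            mul_le_mul h2 hp hp0 (by linarith [hD x])
        _ = _ := by ring
    · exact Filter.Eventually.of_forall fun x _ => hsb
    · exact intervalIntegrable_const
    · refine Filter.Eventually.of_forall fun x hx => ?_
      rw [Set.uIoc_of_le zero_le_one] at hx
      have h0 : 0 ≤ x - x ^ 2 := by nlinarith [hx.1, hx.2]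
      have h1 : x - x ^ 2 < 1 := by linarith [hD x]
      have e : 1 - (x - x ^ 2) = 1 - x + x ^ 2 := by ring
      have s1 := hasSum_coe_mul_geometric_of_norm_lt_one (r := x - x ^ 2)
        (by rwa [Real.norm_of_nonneg h0])
      have s2 := (hasSum_geometric_of_lt_one h0 h1).mul_left (x / (1 - x + x ^ 2))
      rw [e] at s1 s2
      have hd := hD0 x
      have s3 := s1.add s2
      have e1 : (x - x ^ 2) / (1 - x + x ^ 2) ^ 2 + x / (1 - x + x ^ 2) * (1 - x + x ^ 2)⁻¹
          = (2 * x - x ^ 2) / (1 - x + x ^ 2) ^ 2 := by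
        field_simp
        ring
      have e2 : (fun m : ℕ => (m : ℝ) * (x - x ^ 2) ^ m
            + x / (1 - x + x ^ 2) * (x - x ^ 2) ^ m)
          = fun m : ℕ => (m : ℝ) * (x - x ^ 2) ^ m + x * (x - x ^ 2) ^ m / (1 - x + x ^ 2) := by
        funext m
        ring
      rw [e1, e2] at s3
      exact s3
  · have key := intervalIntegral.integral_eq_sub_of_hasDerivAt (a := 0) (b := 1)
      (f := fun x : ℝ => (x - 1) / (1 - x + x ^ 2))
      (f' := fun x : ℝ => (2 * x - x ^ 2) / (1 - x + x ^ 2) ^ 2) ?_ ?_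
    · rw [key]; norm_num
    · intro x _
      have hn : HasDerivAt (fun x : ℝ => x - 1) 1 x := (hasDerivAt_id x).sub_const 1
      have hd : HasDerivAt (fun x : ℝ => 1 - x + x ^ 2) (-1 + 2 * x) x := by
        have h := ((hasDerivAt_id' x).const_sub 1).add (hasDerivAt_pow 2 x)
        have e : (-1 + 2 * x : ℝ) = -1 + ((2 : ℕ) : ℝ) * x ^ (2 - 1) := by norm_num
        rw [e]
        exact h
      have h := hn.div hd (hD0 x)
      have e : (2 * x - x ^ 2) / (1 - x + x ^ 2) ^ 2
          = (1 * (1 - x + x ^ 2) - (x - 1) * (-1 + 2 * x)) / (1 - x + x ^ 2) ^ 2 := by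
        congr 1
        ring
      rw [e]
      exact h
    · refine Continuous.intervalIntegrable ?_ _ _
      exact Continuous.div (by fun_prop) (by fun_prop) fun x => pow_ne_zero 2 (hD0 x)
end

section
/- Let ρ ∈ (0,1). Then lim_{n → ∞} (1/n)·B(1/n, (1−ρ)^{−n}) = 1 − ρ, where B(a,b) = Γ(a)Γ(b)/Γ(a+b) is the Beta function and Γ is the real Gamma function, and n ranges over the positive integers. -/
open Filter

lemma gamma_aux_upper {x s : ℝ} (hx : 0 < x) (hs : 0 < s) (hs1 : s < 1) :
    Real.Gamma (x + s) ≤ Real.Gamma x * x ^ s := by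
  have h := Real.Gamma_mul_add_mul_le_rpow_Gamma_mul_rpow_Gamma (s := x) (t := x + 1)
    (a := 1 - s) (b := s) hx (by linarith) (by linarith) hs (by ring)
  have hG := Real.Gamma_pos_of_pos hx
  rw [Real.Gamma_add_one hx.ne', Real.mul_rpow hx.le hG.le] at h
  have e : (1 - s) * x + s * (x + 1) = x + s := by ring
  rw [e] at h
  have e2 : Real.Gamma x ^ (1 - s) * Real.Gamma x ^ s = Real.Gamma x := by
    rw [← Real.rpow_add hG]; simp
  calc _ ≤ _ := h
    _ = (Real.Gamma x ^ (1 - s) * Real.Gamma x ^ s) * x ^ s := by ring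
    _ = _ := by rw [e2]

lemma gamma_aux_lower {x s : ℝ} (hx : 0 < x) (hs : 0 < s) (hs1 : s < 1) :
    x * Real.Gamma x ≤ Real.Gamma (x + s) * (x + s) ^ (1 - s) := by
  have h := gamma_aux_upper (x := x + s) (s := 1 - s) (by linarith) (by linarith) (by linarith)
  rw [← Real.Gamma_add_one hx.ne']
  convert h using 2
  ring

/-- For `ρ ∈ (0,1)`,
`lim_{n → ∞} (1/n) B(1/n, (1−ρ)^{−n}) = 1 − ρ`, where `B(a,b) = Γ(a)Γ(b)/Γ(a+b)`. -/
theorem stmt17 (ρ : ℝ) (hρ : ρ ∈ Set.Ioo (0 : ℝ) 1) :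
    Tendsto (fun n : ℕ =>
        (1 / (n : ℝ)) *
          (Real.Gamma (1 / (n : ℝ)) * Real.Gamma (((1 - ρ) ^ n)⁻¹) /
            Real.Gamma (1 / (n : ℝ) + ((1 - ρ) ^ n)⁻¹)))
      atTop (nhds (1 - ρ)) := by
  obtain ⟨h0, h1⟩ := hρ
  have hc : 0 < 1 - ρ := by linarith
  have hc1 : 1 - ρ ≤ 1 := by linarith
  generalize 1 - ρ = c at *
  have hs : Tendsto (fun n : ℕ => 1 / (n : ℝ)) atTop (nhds 0) := tendsto_one_div_atTop_nhds_zero_nat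
  have hG : Tendsto (fun n : ℕ => Real.Gamma (1 / (n : ℝ) + 1)) atTop (nhds 1) := by
    have hd : ContinuousAt Real.Gamma 1 := by
      apply (Real.differentiableAt_Gamma _).continuousAt
      intro m
      have : (0 : ℝ) ≤ m := m.cast_nonneg
      intro h; linarith
    have h2 : Tendsto (fun n : ℕ => 1 / (n : ℝ) + 1) atTop (nhds 1) := by
      simpa using hs.add_const 1
    have := hd.tendsto.comp h2
    rwa [Real.Gamma_one] at this
  have key : ∀ᶠ n : ℕ in atTop,
      c ≤ Real.Gamma ((c ^ n)⁻¹) / Real.Gamma (1 / (n : ℝ) + (c ^ n)⁻¹) ∧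
      Real.Gamma ((c ^ n)⁻¹) / Real.Gamma (1 / (n : ℝ) + (c ^ n)⁻¹) ≤ (1 + 1 / (n : ℝ)) * c := by
    filter_upwards [eventually_ge_atTop 2] with n hn
    have hn' : (2 : ℝ) ≤ n := by exact_mod_cast hn
    have hs0 : 0 < 1 / (n : ℝ) := by positivity
    have hs1 : 1 / (n : ℝ) < 1 := by rw [div_lt_one (by linarith)]; linarith
    have hx1 : 1 ≤ (c ^ n)⁻¹ := (one_le_inv₀ (by positivity)).2 (pow_le_one₀ hc.le hc1)
    have hxs : ((c ^ n)⁻¹) ^ (1 / (n : ℝ)) = c⁻¹ := by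
      rw [← inv_pow, one_div, Real.pow_rpow_inv_natCast (by positivity) (by omega)]
    generalize (c ^ n)⁻¹ = x at *
    generalize 1 / (n : ℝ) = s at *
    have hx : 0 < x := by linarith
    have hu := gamma_aux_upper hx hs0 hs1
    have hl := gamma_aux_lower hx hs0 hs1
    rw [add_comm s x]
    have hGs : 0 < Real.Gamma (x + s) := Real.Gamma_pos_of_pos (by linarith)
    rw [hxs] at hu
    constructor
    · rw [le_div_iff₀ hGs]
      rwa [← div_eq_mul_inv, le_div_iff₀ hc, mul_comm] at hu
    · rw [div_le_iff₀ hGs]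
      have hp : (x + s) ^ (1 - s) ≤ (x + s) * c := by
        rw [Real.rpow_sub (by linarith), Real.rpow_one, div_eq_mul_inv]
        apply mul_le_mul_of_nonneg_left _ (by linarith)
        rw [inv_le_comm₀ (by positivity) hc, ← hxs]
        exact Real.rpow_le_rpow hx.le (by linarith) hs0.le
      have h3 : (x + s) * c ≤ x * ((1 + s) * c) := by
        have : x + s ≤ x * (1 + s) := by nlinarith
        nlinarith
      have h4 := mul_le_mul_of_nonneg_left (hp.trans h3) hGs.le
      refine le_of_mul_le_mul_left ?_ hx
      linarith
  have hR : Tendsto (fun n : ℕ => Real.Gamma ((c ^ n)⁻¹) / Real.Gamma (1 / (n : ℝ) + (c ^ n)⁻¹))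
      atTop (nhds c) := by
    refine tendsto_of_tendsto_of_tendsto_of_le_of_le' tendsto_const_nhds ?_
      (key.mono fun _ h => h.1) (key.mono fun _ h => h.2)
    simpa using (hs.const_add 1).mul_const c
  have := hG.mul hR
  rw [one_mul] at this
  refine this.congr' ?_
  filter_upwards [eventually_ge_atTop 1] with n hn
  have hn0 : 1 / (n : ℝ) ≠ 0 := by positivity
  rw [Real.Gamma_add_one hn0]
  ring
end

section
/- Define polynomials p_n on [0,1] by p_1(x) = x and p_{n+1}(x) = 2x·p_n(x) − x·p_n(x)². Then for every x ∈ [0,1] the sequence (p_n(x))_{n ≥ 1} is nonincreasing, and lim_{n → ∞} p_n(x) = φ(x), where φ(x) = max{0, 2 − 1/x} for x ∈ (0,1] and φ(0) = 0 (that is, the limit equals 2 − 1/x for x ∈ [1/2, 1] and 0 for x ∈ [0, 1/2]). Moreover, for each n, ∫_0^1 p_n(x)/x dx is well defined and lim_{n → ∞} ∫_0^1 p_n(x)/x dx = ∫_{1/2}^1 (2 − 1/x)/x dx = ln 4 − 1. -/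
open Filter intervalIntegral

/-- With `p_1(x) = x` and `p_{n+1}(x) = 2x p_n(x) − x p_n(x)²`:
for every `x ∈ [0,1]` the sequence `(p_n(x))_{n ≥ 1}` is nonincreasing and converges to
`φ(x)` (`= 2 − 1/x` on `[1/2,1]`, `= 0` on `[0,1/2]`); each `∫_0^1 p_n(x)/x dx` is well
defined, and `lim_n ∫_0^1 p_n(x)/x dx = ∫_{1/2}^1 (2 − 1/x)/x dx = ln 4 − 1`. -/
theorem stmt18 (p : ℕ → ℝ → ℝ)
    (hp1 : ∀ x : ℝ, p 1 x = x)
    (hrec : ∀ n : ℕ, 1 ≤ n → ∀ x : ℝ, p (n + 1) x = 2 * x * p n x - x * (p n x) ^ 2) :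
    (∀ x ∈ Set.Icc (0 : ℝ) 1, ∀ n : ℕ, 1 ≤ n → p (n + 1) x ≤ p n x) ∧
    (∀ x ∈ Set.Icc (0 : ℝ) 1, Tendsto (fun n => p n x) atTop
      (nhds (if x = 0 then 0 else max 0 (2 - 1 / x)))) ∧
    (∀ n : ℕ, 1 ≤ n → IntervalIntegrable (fun x => p n x / x) MeasureTheory.volume 0 1) ∧
    Tendsto (fun n => ∫ x in (0 : ℝ)..1, p n x / x) atTop
      (nhds (∫ x in (1/2 : ℝ)..1, (2 - 1 / x) / x)) ∧
    (∫ x in (1/2 : ℝ)..1, (2 - 1 / x) / x) = Real.log 4 - 1 := by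
  have bd : ∀ x ∈ Set.Icc (0 : ℝ) 1, ∀ n : ℕ, 1 ≤ n →
      0 ≤ p n x ∧ p n x ≤ x ∧ 2 * x - 1 ≤ x * p n x := by
    rintro x ⟨h0, h1⟩ n hn
    induction n, hn using Nat.le_induction with
    | base => rw [hp1]; exact ⟨h0, le_refl _, by nlinarith [sq_nonneg (x - 1)]⟩
    | succ n hn ih =>
      obtain ⟨a, b, c⟩ := ih
      rw [hrec n hn]
      refine ⟨?_, ?_, ?_⟩
      · have : 0 ≤ x * (p n x * (2 - p n x)) :=
          mul_nonneg h0 (mul_nonneg a (by linarith))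
        nlinarith
      · nlinarith [mul_nonneg h0 (sq_nonneg (1 - p n x))]
      · have h2 : x * p n x ≤ x := by nlinarith
        have h3 : 0 ≤ (1 - 2 * x + x * p n x) * (1 - x * p n x) :=
          mul_nonneg (by linarith) (by linarith)
        nlinarith
  have anti : ∀ x ∈ Set.Icc (0 : ℝ) 1, ∀ n : ℕ, 1 ≤ n → p (n + 1) x ≤ p n x := by
    intro x hx n hn
    obtain ⟨a, b, c⟩ := bd x hx n hn
    rw [hrec n hn]
    have : 0 ≤ p n x * (1 - 2 * x + x * p n x) := mul_nonneg a (by linarith)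
    nlinarith
  have lim : ∀ x ∈ Set.Icc (0 : ℝ) 1, Tendsto (fun n => p n x) atTop
      (nhds (if x = 0 then 0 else max 0 (2 - 1 / x))) := by
    intro x hx
    rw [← tendsto_add_atTop_iff_nat 1]
    have han : Antitone (fun n => p (n + 1) x) :=
      antitone_nat_of_succ_le fun n => anti x hx (n + 1) (by omega)
    have hbdd : BddBelow (Set.range (fun n => p (n + 1) x)) := by
      refine ⟨0, ?_⟩
      rintro _ ⟨n, rfl⟩
      exact (bd x hx (n + 1) (by omega)).1
    have ht := tendsto_atTop_ciInf han hbdd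
    generalize (⨅ n, p (n + 1) x) = L at ht
    have e1 : 0 ≤ L := ge_of_tendsto' ht fun n => (bd x hx (n + 1) (by omega)).1
    have e2 : L ≤ x := le_of_tendsto' ht fun n => (bd x hx (n + 1) (by omega)).2.1
    have e3 : 2 * x - 1 ≤ x * L :=
      ge_of_tendsto' (ht.const_mul x) fun n => (bd x hx (n + 1) (by omega)).2.2
    have ht2 : Tendsto (fun n => p (n + 1 + 1) x) atTop (nhds L) :=
      (tendsto_add_atTop_iff_nat (f := fun n => p (n + 1) x) 1).2 ht
    have ht3 : Tendsto (fun n => p (n + 1 + 1) x) atTop (nhds (2 * x * L - x * L ^ 2)) := by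
      have := (ht.const_mul (2 * x)).sub ((ht.pow 2).const_mul x)
      refine this.congr fun n => ?_
      rw [hrec (n + 1) (by omega)]
    have e4 := tendsto_nhds_unique ht2 ht3
    have e5 : L * (1 - 2 * x + x * L) = 0 := by linarith
    have : (if x = 0 then 0 else max 0 (2 - 1 / x)) = L := by
      split_ifs with h
      · linarith
      · have hx0 : 0 < x := lt_of_le_of_ne hx.1 (Ne.symm h)
        rcases mul_eq_zero.1 e5 with h5 | h5
        · subst h5
          apply max_eq_left
          have : 2 ≤ 1 / x := by rw [le_div_iff₀ hx0]; linarith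
          linarith
        · have : 2 - 1 / x = L := by field_simp; linarith
          rw [this]; exact max_eq_right e1
    rw [this]; exact ht
  have cont : ∀ n : ℕ, 1 ≤ n → Continuous (p n) := by
    intro n hn
    induction n, hn using Nat.le_induction with
    | base => rw [show p 1 = id from funext hp1]; exact continuous_id
    | succ n hn ih =>
      rw [show p (n + 1) = _ from funext (hrec n hn)]
      fun_prop
  have meas : ∀ n : ℕ, 1 ≤ n → Measurable (fun x => p n x / x) :=
    fun n hn => (cont n hn).measurable.div measurable_id
  have nb : ∀ n : ℕ, 1 ≤ n → ∀ x ∈ Set.uIoc (0 : ℝ) 1, ‖p n x / x‖ ≤ 1 := by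
    intro n hn x hx
    rw [Set.uIoc_of_le zero_le_one] at hx
    obtain ⟨a, b, -⟩ := bd x ⟨hx.1.le, hx.2⟩ n hn
    rw [Real.norm_of_nonneg (div_nonneg a hx.1.le)]
    exact (div_le_one hx.1).2 b
  refine ⟨anti, lim, ?_, ?_, ?_⟩
  · intro n hn
    refine (intervalIntegrable_const (c := (1 : ℝ))).mono_fun
      (meas n hn).aestronglyMeasurable ?_
    refine (MeasureTheory.ae_restrict_iff' measurableSet_uIoc).2 (.of_forall fun x hx => ?_)
    simpa using nb n hn x hx
  · have key : (∫ x in (1/2 : ℝ)..1, (2 - 1 / x) / x)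
        = ∫ x in (0 : ℝ)..1, (max 0 (2 - 1 / x)) / x := by
      have c1 : Set.EqOn (fun x : ℝ => (0 : ℝ)) (fun x : ℝ => (max 0 (2 - 1 / x)) / x)
          (Set.uIoc 0 (1/2)) := by
        intro x hx
        rw [Set.uIoc_of_le (by norm_num)] at hx
        have : 2 ≤ 1 / x := by rw [le_div_iff₀ hx.1]; linarith [hx.2]
        simp only
        rw [max_eq_left (by linarith), zero_div]
      have c2 : Set.EqOn (fun x : ℝ => (2 - 1 / x) / x)
          (fun x : ℝ => (max 0 (2 - 1 / x)) / x) (Set.uIcc (1/2) 1) := by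
        intro x hx
        rw [Set.uIcc_of_le (by norm_num)] at hx
        have h0 : 0 < x := by linarith [hx.1]
        have : 1 / x ≤ 2 := by rw [div_le_iff₀ h0]; linarith [hx.1]
        simp only
        rw [max_eq_right (by linarith)]
      have i1 : IntervalIntegrable (fun x : ℝ => (max 0 (2 - 1 / x)) / x)
          MeasureTheory.volume 0 (1/2) :=
        (intervalIntegrable_const (c := (0 : ℝ))).congr c1
      have i2 : IntervalIntegrable (fun x : ℝ => (max 0 (2 - 1 / x)) / x)
          MeasureTheory.volume (1/2) 1 := by
        apply ContinuousOn.intervalIntegrable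
        have hne : ∀ x ∈ Set.uIcc (1/2 : ℝ) 1, x ≠ 0 := by
          intro x hx
          rw [Set.uIcc_of_le (by norm_num)] at hx
          have : 0 < x := by linarith [hx.1]
          exact this.ne'
        exact (continuousOn_const.sup
          (continuousOn_const.sub (continuousOn_const.div continuousOn_id hne))).div
          continuousOn_id hne
      rw [← integral_add_adjacent_intervals i1 i2, integral_congr c2,
        ← integral_congr_ae (.of_forall c1)]
      simp
    rw [key]
    refine tendsto_integral_filter_of_dominated_convergence (fun _ => (1 : ℝ)) ?_ ?_
      intervalIntegrable_const ?_
    · filter_upwards [eventually_ge_atTop 1] with n hn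
      exact (meas n hn).aestronglyMeasurable
    · filter_upwards [eventually_ge_atTop 1] with n hn
      exact .of_forall (nb n hn)
    · refine .of_forall fun x hx => ?_
      rw [Set.uIoc_of_le zero_le_one] at hx
      have := lim x ⟨hx.1.le, hx.2⟩
      rw [if_neg hx.1.ne'] at this
      exact this.div_const x
  · have hpos : ∀ x ∈ Set.uIcc (1/2 : ℝ) 1, x ≠ 0 := by
      intro x hx
      rw [Set.uIcc_of_le (by norm_num)] at hx
      have : 0 < x := by linarith [hx.1]
      exact this.ne'
    rw [integral_eq_sub_of_hasDerivAt (f := fun x => 2 * Real.log x + x⁻¹)]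
    · have h4 : Real.log 4 = 2 * Real.log 2 := by
        rw [show (4 : ℝ) = 2 ^ 2 by norm_num, Real.log_pow]; norm_num
      have h2 : Real.log (1 / 2) = - Real.log 2 := by
        rw [one_div, Real.log_inv]
      rw [h4, h2, Real.log_one]; norm_num; ring
    · intro x hx
      have h := hpos x hx
      refine (((Real.hasDerivAt_log h).const_mul 2).add (hasDerivAt_inv h)).congr_deriv ?_
      field_simp
      try ring
    · apply ContinuousOn.intervalIntegrable
      exact (continuousOn_const.sub (continuousOn_const.div continuousOn_id hpos)).div
        continuousOn_id hpos
end

section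
/- Let φ : [0,1] → ℝ be given by φ(x) = max{0, 2 − 1/x} for x ∈ (0,1] and φ(0) = 0. Then Σ_{m=0}^{∞} C(2m, m) · ∫_0^1 x^{m−1}(1−x)^m · φ(x) dx = 1, where C(2m,m) denotes the central binomial coefficient (and for m = 0 the integrand x^{−1}φ(x) is integrable since φ vanishes on [0,1/2]). -/
open intervalIntegral

lemma aux_choose (n : ℕ) :
    Ring.choose (-(1/2) : ℝ) n * (-4) ^ n = (Nat.choose (2 * n) n : ℝ) := by
  rw [← Nat.centralBinom_eq_two_mul_choose]
  induction n with
  | zero => simp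
  | succ n ih =>
    have h1 := Ring.choose_smul_choose (-(1/2) : ℝ) (Nat.le_succ n)
    simp only [Nat.succ_eq_add_one, Nat.choose_succ_self_right, Nat.add_sub_cancel_left,
      Ring.choose_one_right, nsmul_eq_mul] at h1
    have h2 : ((n : ℝ) + 1) * (n + 1).centralBinom = 2 * (2 * n + 1) * n.centralBinom := by
      exact_mod_cast Nat.succ_mul_centralBinom_succ n
    have h3 : ((n : ℝ) + 1) ≠ 0 := by positivity
    apply mul_left_cancel₀ h3
    rw [h2, ← ih]
    push_cast at h1
    rw [← mul_assoc, h1]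
    ring

lemma aux_gen (x : ℝ) (hx : 1 / 2 < x) (hx1 : x ≤ 1) :
    HasSum (fun m : ℕ => (Nat.choose (2 * m) m : ℝ) * (x ^ m * (1 - x) ^ m))
      (1 / (2 * x - 1)) := by
  have h := (Real.one_add_rpow_hasFPowerSeriesOnBall_zero (a := (-(1/2) : ℝ))).hasSum
    (y := -4 * (x * (1 - x))) (by
      rw [← ENNReal.ofReal_one, Metric.eball_ofReal, mem_ball_zero_iff, Real.norm_eq_abs, abs_lt]
      constructor <;> nlinarith)
  have e : (1 + (0 + -4 * (x * (1 - x)))) ^ (-(1/2) : ℝ) = 1 / (2 * x - 1) := by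
    rw [show 1 + (0 + -4 * (x * (1 - x))) = (2 * x - 1) ^ 2 by ring, Real.rpow_neg (sq_nonneg _),
      ← Real.sqrt_eq_rpow, Real.sqrt_sq (by linarith), one_div]
  rw [e] at h
  suffices hf : (fun m : ℕ => (Nat.choose (2 * m) m : ℝ) * (x ^ m * (1 - x) ^ m)) =
      fun n => (binomialSeries ℝ (-(1 / 2) : ℝ) n) fun _ => -4 * (x * (1 - x)) by
    rw [hf]; exact h
  ext m
  rw [← aux_choose, binomialSeries_apply]
  simp only [List.ofFn_const, List.prod_replicate, smul_eq_mul, mul_pow]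
  ring

lemma aux_term (m : ℕ) : (∫ x in (0 : ℝ)..1,
      x ^ ((m : ℤ) - 1) * (1 - x) ^ m * (if x = 0 then 0 else max 0 (2 - 1 / x)))
    = ∫ x in (1 / 2 : ℝ)..1, (x ^ m * (1 - x) ^ m) * ((2 * x - 1) / x ^ 2) := by
  rw [integral_of_le (by norm_num), integral_of_le (by norm_num)]
  rw [MeasureTheory.setIntegral_eq_of_subset_of_forall_sdiff_eq_zero (s := Set.Ioc (1/2 : ℝ) 1)
    measurableSet_Ioc (Set.Ioc_subset_Ioc_left (by norm_num))]
  · apply MeasureTheory.setIntegral_congr_fun measurableSet_Ioc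
    rintro x ⟨h1, h2⟩
    have h0 : 0 < x := by linarith
    have : 1 / x ≤ 2 := by rw [div_le_iff₀ h0]; linarith
    simp only [if_neg h0.ne']
    rw [max_eq_right (by linarith), zpow_sub₀ h0.ne', zpow_natCast, zpow_one]
    field_simp
  · rintro x ⟨⟨h0, h1⟩, h2⟩
    have h3 : x ≤ 1 / 2 := by
      by_contra h
      exact h2 ⟨not_le.mp h, h1⟩
    have : 2 ≤ 1 / x := by rw [le_div_iff₀ h0]; linarith
    rw [if_neg h0.ne', max_eq_left (by linarith), mul_zero]

/-- With `φ(x) = max {0, 2 − 1/x}` for `x ∈ (0,1]` and `φ(0) = 0`,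
`Σ_{m=0}^∞ C(2m,m) ∫_0^1 x^{m−1} (1−x)^m φ(x) dx = 1`. -/
theorem stmt19 :
    (∑' m : ℕ, (Nat.choose (2 * m) m : ℝ) *
        ∫ x in (0 : ℝ)..1,
          x ^ ((m : ℤ) - 1) * (1 - x) ^ m * (if x = 0 then 0 else max 0 (2 - 1 / x)))
      = 1 := by
  simp_rw [aux_term, ← integral_const_mul]
  have hle : (1 / 2 : ℝ) ≤ 1 := by norm_num
  have hs : ∀ x ∈ Set.uIoc (1 / 2 : ℝ) 1, HasSum (fun m : ℕ => (Nat.choose (2 * m) m : ℝ) *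
      ((x ^ m * (1 - x) ^ m) * ((2 * x - 1) / x ^ 2))) (x ^ (-2 : ℤ)) := by
    intro x hx
    rw [Set.uIoc_of_le hle] at hx
    have h0 : 0 < x := by linarith [hx.1]
    have h1 : 2 * x - 1 ≠ 0 := by linarith [hx.1]
    have h2 := (aux_gen x hx.1 hx.2).mul_right ((2 * x - 1) / x ^ 2)
    have h3 : x ^ (-2 : ℤ) = 1 / (2 * x - 1) * ((2 * x - 1) / x ^ 2) := by
      rw [zpow_neg]; norm_cast; generalize 2 * x - 1 = y at h1 ⊢; field_simp
    rw [h3]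
    simpa only [mul_assoc] using h2
  have hnot : (0 : ℝ) ∉ Set.uIcc (1 / 2 : ℝ) 1 := by
    rw [Set.uIcc_of_le hle]; rintro ⟨h, -⟩; norm_num at h
  have key := hasSum_integral_of_dominated_convergence (μ := MeasureTheory.volume)
    (a := (1 / 2 : ℝ)) (b := 1) (f := fun x : ℝ => x ^ (-2 : ℤ))
    (F := fun (m : ℕ) (x : ℝ) => (Nat.choose (2 * m) m : ℝ) *
      ((x ^ m * (1 - x) ^ m) * ((2 * x - 1) / x ^ 2)))
    (fun (m : ℕ) (x : ℝ) => (Nat.choose (2 * m) m : ℝ) *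
      ((x ^ m * (1 - x) ^ m) * ((2 * x - 1) / x ^ 2)))
    (fun m => (by fun_prop : Measurable _).aestronglyMeasurable)
    (fun m => Filter.Eventually.of_forall fun x hx => by
      rw [Set.uIoc_of_le hle] at hx
      have h0 : 0 ≤ x := by linarith [hx.1]
      have h1 : 0 ≤ 2 * x - 1 := by linarith [hx.1]
      have h2 : 0 ≤ 1 - x := by linarith [hx.2]
      rw [Real.norm_of_nonneg (by positivity)])
    (Filter.Eventually.of_forall fun x hx => (hs x hx).summable)
    ((intervalIntegrable_zpow (n := -2) (Or.inr hnot)).congr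
      (fun x hx => ((hs x hx).tsum_eq).symm))
    (Filter.Eventually.of_forall hs)
  rw [key.tsum_eq, integral_zpow (Or.inr ⟨by norm_num, hnot⟩)]
  norm_num
end
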